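/- Let X be a set, H any hypothesis class on X, and U a perturbation function on X. With respect to U and the true-label loss ℓ_TL: (a) there exists a robustly-reliable learner L such that for every target h* ∈ H and every labeled sample S labeled by h*, RR^L(S) ⊇ Agree(H_0(S)); and (b) for every robustly-reliable learner L and every labeled sample S, RR^L(S) ⊆ Agree(H_0(S)). -/

import Mathlib

/-!
The target always lies in the version space, and conversely every consistent hypothesis could be
the target. So a learner that predicts with any consistent hypothesis, and answers only where all
of them agree, predicts the true label. Conversely, if a robustly-reliable learner answers at a
point that is a perturbation of something, its one prediction there equals the label given by every
consistent hypothesis. Points lie in their own perturbation sets, so this covers all of `X`.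
-/

/-- `S` is labeled by `h` : every labeled pair in `S` carries the label `h` assigns. -/
def labeledBy {X : Type*} (S : List (X × Bool)) (h : X → Bool) : Prop :=
  ∀ p ∈ S, p.2 = h p.1

/-- Version space: hypotheses in `H` consistent with the sample `S`. -/
def versionSpace {X : Type*} (H : Set (X → Bool)) (S : List (X × Bool)) : Set (X → Bool) :=
  {h ∈ H | ∀ p ∈ S, h p.1 = p.2}

/-- Agreement region of a set of hypotheses. -/
def agree {X : Type*} (G : Set (X → Bool)) : Set X :=
  {x | ∀ h₁ ∈ G, ∀ h₂ ∈ G, h₁ x = h₂ x}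

/-- True-label loss `ℓ_TL^{h*}(h,x,z)`. -/
def lossTL {X : Type*} (hs h : X → Bool) (x z : X) : ℕ :=
  if h z ≠ hs z then 1 else 0

/-- A learner (`hyp`, `abst`) is robustly reliable w.r.t. a perturbation function `U`
and loss `ℓ`: for every target `hs ∈ H` and every sample labeled by `hs`, whenever the
learner does not abstain at `z` and `z ∈ U x`, the loss `ℓ hs (hyp S) x z` vanishes. -/
def RobustlyReliableU {X : Type*} (H : Set (X → Bool)) (U : X → Set X)
    (ℓ : (X → Bool) → (X → Bool) → X → X → ℕ)
    (hyp : List (X × Bool) → X → Bool) (abst : List (X × Bool) → X → Bool) : Prop :=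
  ∀ hs ∈ H, ∀ S : List (X × Bool), labeledBy S hs →
    ∀ x z : X, abst S z = true → z ∈ U x → ℓ hs (hyp S) x z = 0

/-- The robustly-reliable region: points where the learner does not abstain. -/
def RRregionU {X : Type*} (abst : List (X × Bool) → X → Bool) (S : List (X × Bool)) : Set X :=
  {z | abst S z = true}

section

variable {X : Type*} {H : Set (X → Bool)} {U : X → Set X} {S : List (X × Bool)}
  {hyp abst : List (X × Bool) → X → Bool}

lemma mem_versionSpace_iff {h : X → Bool} : h ∈ versionSpace H S ↔ h ∈ H ∧ labeledBy S h :=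
  and_congr_right fun _ => forall₂_congr fun _ _ => eq_comm

lemma lossTL_eq_zero_iff {hs h : X → Bool} {x z : X} : lossTL hs h x z = 0 ↔ h z = hs z := by
  simp [lossTL]

lemma robustlyReliableU_lossTL_of_subset_agree
    (hyp_mem : ∀ S, (versionSpace H S).Nonempty → hyp S ∈ versionSpace H S)
    (region_subset : ∀ S, RRregionU abst S ⊆ agree (versionSpace H S)) :
    RobustlyReliableU H U lossTL hyp abst := by
  intro hs hsH S hS x z hz _
  have hs_mem : hs ∈ versionSpace H S := mem_versionSpace_iff.2 ⟨hsH, hS⟩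
  exact lossTL_eq_zero_iff.2 (region_subset S hz _ (hyp_mem S ⟨hs, hs_mem⟩) _ hs_mem)

/-- A hypothesis consistent with the sample `S`. When no hypothesis in `H` is consistent with `S`,
the choice made by `Classical.epsilon` is arbitrary. -/
noncomputable def consistentHyp (H : Set (X → Bool)) (S : List (X × Bool)) : X → Bool :=
  Classical.epsilon (· ∈ versionSpace H S)

lemma consistentHyp_mem_versionSpace (hne : (versionSpace H S).Nonempty) :
    consistentHyp H S ∈ versionSpace H S :=
  Classical.epsilon_spec hne

open Classical in
/-- The abstention function that answers exactly on the agreement region of the version space;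
as in `RRregionU`, the value `true` means that the learner answers. -/
noncomputable def agreementAbst (H : Set (X → Bool)) (S : List (X × Bool)) (z : X) : Bool :=
  decide (z ∈ agree (versionSpace H S))

lemma RRregionU_agreementAbst (H : Set (X → Bool)) (S : List (X × Bool)) :
    RRregionU (agreementAbst H) S = agree (versionSpace H S) := by
  ext z
  simp [RRregionU, agreementAbst]

lemma robustlyReliableU_consistentHyp_agreementAbst (H : Set (X → Bool)) (U : X → Set X) :
    RobustlyReliableU H U lossTL (consistentHyp H) (agreementAbst H) :=
  robustlyReliableU_lossTL_of_subset_agree (fun _ => consistentHyp_mem_versionSpace)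
    fun S => (RRregionU_agreementAbst H S).le

lemma RobustlyReliableU.hyp_apply_eq (hR : RobustlyReliableU H U lossTL hyp abst) {h : X → Bool}
    (hh : h ∈ versionSpace H S) {x z : X} (hz : z ∈ RRregionU abst S) (hzx : z ∈ U x) :
    hyp S z = h z :=
  have ⟨hH, hS⟩ := mem_versionSpace_iff.1 hh
  lossTL_eq_zero_iff.1 (hR h hH S hS x z hz hzx)

lemma RobustlyReliableU.region_inter_iUnion_subset_agree
    (hR : RobustlyReliableU H U lossTL hyp abst) (S : List (X × Bool)) :
    RRregionU abst S ∩ ⋃ x, U x ⊆ agree (versionSpace H S) := by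
  rintro z ⟨hz, hzU⟩ h₁ hh₁ h₂ hh₂
  obtain ⟨x, hzx⟩ := Set.mem_iUnion.1 hzU
  exact (hR.hyp_apply_eq hh₁ hz hzx).symm.trans (hR.hyp_apply_eq hh₂ hz hzx)

end

theorem rr_region_eq_agreement_U_TL_general {X : Type*} (H : Set (X → Bool)) (U : X → Set X) :
    (∃ hyp abst : List (X × Bool) → X → Bool, RobustlyReliableU H U lossTL hyp abst ∧
      ∀ S, RRregionU abst S = agree (versionSpace H S)) ∧
    (∀ hyp abst : List (X × Bool) → X → Bool, RobustlyReliableU H U lossTL hyp abst →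
      ∀ S, RRregionU abst S ∩ ⋃ x, U x ⊆ agree (versionSpace H S)) :=
  ⟨⟨consistentHyp H, agreementAbst H, robustlyReliableU_consistentHyp_agreementAbst H U,
    RRregionU_agreementAbst H⟩, fun _ _ hR => hR.region_inter_iUnion_subset_agree⟩

/-- Theorem 3.6(a) (for `ℓ_TL`): for any perturbation function `U` (with `x ∈ U x`),
(a) there is a robustly-reliable learner w.r.t. `U` and `ℓ_TL` whose robustly-reliable region
contains the agreement region of the version space, for every target `h* ∈ H` and every sample
labeled by it; (b) for every robustly-reliable learner and every sample, the robustly-reliable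
region is contained in the agreement region of the version space. -/
theorem rr_region_eq_agreement_U_TL {X : Type*} (H : Set (X → Bool)) (U : X → Set X)
    (hU : ∀ x, x ∈ U x) :
    (∃ (hyp : List (X × Bool) → X → Bool) (abst : List (X × Bool) → X → Bool),
      RobustlyReliableU H U lossTL hyp abst ∧
      ∀ hs ∈ H, ∀ S : List (X × Bool), labeledBy S hs →
        agree (versionSpace H S) ⊆ RRregionU abst S) ∧
    (∀ (hyp : List (X × Bool) → X → Bool) (abst : List (X × Bool) → X → Bool),
      RobustlyReliableU H U lossTL hyp abst →
      ∀ S : List (X × Bool), RRregionU abst S ⊆ agree (versionSpace H S)) := by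
  obtain ⟨⟨hyp, abst, hR, region_eq⟩, region_subset⟩ := rr_region_eq_agreement_U_TL_general H U
  exact ⟨⟨hyp, abst, hR, fun _ _ S _ => (region_eq S).ge⟩, fun hyp abst hR S z hz =>
    region_subset hyp abst hR S ⟨hz, Set.mem_iUnion.2 ⟨z, hU z⟩⟩⟩
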